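/- arXiv:1502.07990 — 4 statements merged into one kernel-verified Lean document; each statement's English description precedes it below -/
import Mathlib

section
/- Let α and β be real numbers with 0 < α, 0 < β and α + β < π/2. Set ω = cos(β)/√(cos²(β) − sin²(α)) and r = ω·cos(α) − √(ω²·cos²(α) − 1). Then ω²·cos²(α) − 1 ≥ 0, r satisfies the quadratic equation r² − 2ω·r·cos(α) + 1 = 0, one has 0 < r < 1, and moreover r = cos(α + β)/√(cos²(β) − sin²(α)). -/
open Real

/-!
The radicand factors as `cos² β - sin² α = cos (α + β) * cos (α - β)`. The quantity
`ω² cos² α - 1` is the square of `sin α * sin β / √(cos² β - sin² α)`, so the smaller root `r`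
collapses to `cos (α + β) / √(cos² β - sin² α) = √(cos (α + β) / cos (α - β))`, which is less than
`1` because `cos (α + β) < cos (α - β)`.
-/

theorem quadratic_sub_sqrt_eq_zero {b c : ℝ} (h : c ≤ b ^ 2) :
    (b - √(b ^ 2 - c)) ^ 2 - 2 * b * (b - √(b ^ 2 - c)) + c = 0 := by
  linear_combination sq_sqrt (sub_nonneg.2 h)

theorem cos_add_mul_cos_sub (α β : ℝ) :
    cos (α + β) * cos (α - β) = cos β ^ 2 - sin α ^ 2 := by
  rw [cos_add, cos_sub]
  linear_combination cos β ^ 2 * sin_sq_add_cos_sq α - sin α ^ 2 * sin_sq_add_cos_sq β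

section

variable {α β : ℝ}

theorem cos_add_lt_cos_sub (h : 0 < sin α * sin β) : cos (α + β) < cos (α - β) := by
  rw [cos_add, cos_sub]
  linarith

theorem sq_cos_div_sqrt_mul_cos_sub_one (hD : 0 < cos β ^ 2 - sin α ^ 2) :
    (cos β / √(cos β ^ 2 - sin α ^ 2) * cos α) ^ 2 - 1 =
      (sin α * sin β / √(cos β ^ 2 - sin α ^ 2)) ^ 2 := by
  have hnum : (cos β * cos α) ^ 2 - (cos β ^ 2 - sin α ^ 2) = (sin α * sin β) ^ 2 := by
    linear_combination
      cos β ^ 2 * sin_sq_add_cos_sq α - sin α ^ 2 * sin_sq_add_cos_sq β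
  rw [div_mul_eq_mul_div, div_pow, div_pow, sq_sqrt hD.le, ← hnum, sub_div, div_self hD.ne']

theorem cos_div_sqrt_mul_cos_sub_sqrt (hD : 0 < cos β ^ 2 - sin α ^ 2)
    (hsin : 0 ≤ sin α * sin β) :
    cos β / √(cos β ^ 2 - sin α ^ 2) * cos α -
        √((cos β / √(cos β ^ 2 - sin α ^ 2) * cos α) ^ 2 - 1) =
      cos (α + β) / √(cos β ^ 2 - sin α ^ 2) := by
  rw [sq_cos_div_sqrt_mul_cos_sub_one hD, sqrt_sq (div_nonneg hsin (sqrt_nonneg _)), cos_add]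
  ring

theorem cos_add_div_sqrt_lt_one (hcos : 0 < cos (α + β)) (hsin : 0 < sin α * sin β) :
    cos (α + β) / √(cos β ^ 2 - sin α ^ 2) < 1 := by
  have hlt : cos (α + β) < √(cos β ^ 2 - sin α ^ 2) := by
    rw [lt_sqrt hcos.le, ← cos_add_mul_cos_sub, sq]
    exact mul_lt_mul_of_pos_left (cos_add_lt_cos_sub hsin) hcos
  exact (div_lt_one (hcos.trans hlt)).2 hlt

end

theorem stmt_3 (α β : ℝ) (hα : 0 < α) (hβ : 0 < β) (hsum : α + β < π / 2)
    (ω r : ℝ) (hω : ω = cos β / Real.sqrt (cos β ^ 2 - sin α ^ 2))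
    (hr : r = ω * cos α - Real.sqrt (ω ^ 2 * cos α ^ 2 - 1)) :
    ω ^ 2 * cos α ^ 2 - 1 ≥ 0 ∧
      r ^ 2 - 2 * ω * r * cos α + 1 = 0 ∧
      0 < r ∧ r < 1 ∧
      r = cos (α + β) / Real.sqrt (cos β ^ 2 - sin α ^ 2) := by
  have hsin : 0 < sin α * sin β :=
    mul_pos (sin_pos_of_pos_of_lt_pi hα (by linarith)) (sin_pos_of_pos_of_lt_pi hβ (by linarith))
  have hcos : 0 < cos (α + β) := cos_pos_of_mem_Ioo ⟨by linarith, hsum⟩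
  have hD : 0 < cos β ^ 2 - sin α ^ 2 := by
    rw [← cos_add_mul_cos_sub]
    exact mul_pos hcos (hcos.trans (cos_add_lt_cos_sub hsin))
  rw [← mul_pow] at hr ⊢
  have hdisc : 0 ≤ (ω * cos α) ^ 2 - 1 := by
    rw [hω, sq_cos_div_sqrt_mul_cos_sub_one hD]
    positivity
  have hclosed : r = cos (α + β) / √(cos β ^ 2 - sin α ^ 2) := by
    rw [hr, hω, cos_div_sqrt_mul_cos_sub_sqrt hD hsin.le]
  refine ⟨hdisc, ?_, ?_, ?_, hclosed⟩
  · rw [mul_right_comm, mul_assoc 2, hr]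
    exact quadratic_sub_sqrt_eq_zero (sub_nonneg.1 hdisc)
  · exact hclosed ▸ div_pos hcos (sqrt_pos.2 hD)
  · exact hclosed ▸ cos_add_div_sqrt_lt_one hcos hsin
end

section
/- Fix an integer q ≥ 3. For each integer p, let a_p = cos(π/q + π/p), b_p = cos²(π/q) − sin²(π/p), and d_p = 2·a_p·√(b_p)/(a_p² + b_p). Then p²·(1 − d_p²) → π²·tan²(π/q) as p → ∞. -/
/-!
With `α = π / q` and `θ = π / p`, the number `b = cos² α - sin² θ` factors as `a * c`, where
`a = cos (α + θ)` and `c = cos (α - θ)`. Hence `1 - d² = ((c - a) / (c + a))²`, and since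
`c - a = 2 sin α sin θ` and `c + a = 2 cos α cos θ`, one gets the exact identity
`1 - d² = (tan α * tan θ)²`. (Geometrically, `d = tanh R` and `cosh R = cot α * cot θ` for the
hyperbolic circumradius `R`.) The limit follows from `tan θ / θ → 1` as `θ → 0`.
-/

open Real Filter

open scoped Topology

/-- The Euclidean diameter, in the Poincaré disc, of the circle circumscribing the regular convex
polygon with interior angle `2 * α`, central angle `2 * θ`, and one vertex at the centre of the
disc. The polygon with `p` sides and interior angle `2 * π / q` has `α = π / q` and `θ = π / p`.
When `cos α ^ 2 < sin θ ^ 2` there is no such polygon and the square root takes its junk value. -/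
noncomputable def circumdiameter (α θ : ℝ) : ℝ :=
  2 * cos (α + θ) * √(cos α ^ 2 - sin θ ^ 2) / (cos (α + θ) ^ 2 + (cos α ^ 2 - sin θ ^ 2))

theorem cos_sq_sub_sin_sq_eq_mul (x y : ℝ) :
    cos x ^ 2 - sin y ^ 2 = cos (x + y) * cos (x - y) := by
  rw [cos_add, cos_sub]
  linear_combination sin y ^ 2 * sin_sq_add_cos_sq x - cos x ^ 2 * sin_sq_add_cos_sq y

theorem one_sub_two_mul_sqrt_mul_div_sq {a c : ℝ} (ha : a ≠ 0) (hac : 0 ≤ a * c) :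
    1 - (2 * a * √(a * c) / (a ^ 2 + a * c)) ^ 2 = ((c - a) / (c + a)) ^ 2 := by
  have hden : a ^ 2 + a * c = a * (c + a) := by ring
  have hsum : c + a ≠ 0 :=
    right_ne_zero_of_mul (hden ▸ add_pos_of_pos_of_nonneg (sq_pos_of_ne_zero ha) hac).ne'
  rw [hden, div_pow, mul_pow _ (√_), sq_sqrt hac]
  field_simp
  ring

theorem one_sub_circumdiameter_sq {α θ : ℝ} (h : 0 < cos α ^ 2 - sin θ ^ 2) :
    1 - circumdiameter α θ ^ 2 = (tan α * tan θ) ^ 2 := by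
  rw [cos_sq_sub_sin_sq_eq_mul] at h
  have hdiff : cos (α - θ) - cos (α + θ) = 2 * (sin α * sin θ) := by
    rw [cos_add, cos_sub]; ring
  have hsum : cos (α - θ) + cos (α + θ) = 2 * (cos α * cos θ) := by
    rw [cos_add, cos_sub]; ring
  rw [circumdiameter, cos_sq_sub_sin_sq_eq_mul,
    one_sub_two_mul_sqrt_mul_div_sq (left_ne_zero_of_mul h.ne') h.le, hdiff, hsum,
    mul_div_mul_left _ _ two_ne_zero, mul_div_mul_comm, ← tan_eq_sin_div_cos,
    ← tan_eq_sin_div_cos]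

theorem tendsto_tan_div_self_nhdsNE_zero : Tendsto (fun x : ℝ ↦ tan x / x) (𝓝[≠] 0) (𝓝 1) := by
  have hderiv : HasDerivAt tan 1 0 := by simpa using hasDerivAt_tan (x := 0) (by simp)
  simpa [div_eq_inv_mul] using hderiv.tendsto_slope_zero

theorem tendsto_one_sub_circumdiameter_sq_div_sq {α : ℝ} (hα : cos α ≠ 0) :
    Tendsto (fun θ ↦ (1 - circumdiameter α θ ^ 2) / θ ^ 2) (𝓝[≠] 0) (𝓝 (tan α ^ 2)) := by
  have hpos : ∀ᶠ θ in 𝓝[≠] 0, 0 < cos α ^ 2 - sin θ ^ 2 := by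
    have hcont : Continuous fun θ ↦ cos α ^ 2 - sin θ ^ 2 := by fun_prop
    refine nhdsWithin_le_nhds (hcont.continuousAt.eventually_const_lt ?_)
    simpa using sq_pos_of_ne_zero hα
  have hlim : Tendsto (fun θ ↦ (tan α * (tan θ / θ)) ^ 2) (𝓝[≠] 0) (𝓝 (tan α ^ 2)) := by
    simpa using (tendsto_tan_div_self_nhdsNE_zero.const_mul (tan α)).pow 2
  refine hlim.congr' ?_
  filter_upwards [hpos] with θ hθ
  rw [one_sub_circumdiameter_sq hθ, ← mul_div_assoc, div_pow]

theorem tendsto_const_div_atTop_nhdsNE_zero {𝕜 : Type*} [Field 𝕜] [LinearOrder 𝕜]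
    [IsStrictOrderedRing 𝕜] [TopologicalSpace 𝕜] [OrderTopology 𝕜] {c : 𝕜} (hc : c ≠ 0) :
    Tendsto (fun x : 𝕜 ↦ c / x) atTop (𝓝[≠] 0) :=
  tendsto_nhdsWithin_iff.2 ⟨tendsto_id.const_div_atTop c,
    (eventually_ne_atTop 0).mono fun _ hx ↦ div_ne_zero hc hx⟩

theorem stmt_10_general {α : ℝ} (hα : cos α ≠ 0) :
    Tendsto (fun p : ℝ ↦ p ^ 2 * (1 - circumdiameter α (π / p) ^ 2)) atTop
      (𝓝 (π ^ 2 * tan α ^ 2)) := by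
  have hlim := ((tendsto_one_sub_circumdiameter_sq_div_sq hα).comp
    (tendsto_const_div_atTop_nhdsNE_zero pi_ne_zero)).const_mul (π ^ 2)
  refine hlim.congr fun p ↦ ?_
  rw [Function.comp_apply, div_pow, div_div_eq_mul_div,
    mul_div_cancel₀ _ (pow_ne_zero 2 pi_ne_zero), mul_comm]

theorem cos_pi_div_pos {x : ℝ} (hx : 2 < x) : 0 < cos (π / x) :=
  cos_pos_of_mem_Ioo ⟨by linarith [pi_pos, div_pos pi_pos (two_pos.trans hx)],
    div_lt_div_of_pos_left pi_pos two_pos hx⟩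

theorem stmt_10 (q : ℕ) (hq : 3 ≤ q) :
    Tendsto (fun p : ℕ =>
        (p : ℝ) ^ 2 *
          (1 - (2 * cos (π / q + π / p) * Real.sqrt (cos (π / q) ^ 2 - sin (π / p) ^ 2) /
              (cos (π / q + π / p) ^ 2 + (cos (π / q) ^ 2 - sin (π / p) ^ 2))) ^ 2))
      atTop (nhds (π ^ 2 * tan (π / q) ^ 2)) :=
  (stmt_10_general (cos_pi_div_pos (by exact_mod_cast hq)).ne').comp tendsto_natCast_atTop_atTop
end

section
/- For positive integers p and q, let a_{p,q} = cos(π/q + π/p), b_{p,q} = cos²(π/q) − sin²(π/p), and d_{p,q} = 2·a_{p,q}·√(b_{p,q})/(a_{p,q}² + b_{p,q}). Then p²·q²·(1 − d_{p,q}²) → π⁴ as p → ∞ and q → ∞ (jointly, along the product filter). -/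
open Real Filter

/-!
With `α = π / q`, `β = π / p`, the numbers `a = cos (α + β)` and `b = cos² α - sin² β` satisfy
`b + a² = 2 a cos α cos β` and `b - a² = 2 a sin α sin β`. As `d = 2 a √b / (a² + b)`, this gives
the exact formula `1 - d² = ((b - a²) / (b + a²))² = (tan α tan β)²`, and the limit follows from
`q tan (π / q) → π` and `p tan (π / p) → π`. Geometrically, `d = tanh R` where `R` is the hyperbolic
circumradius, `cosh R = cot α cot β`.
-/

/-- The Euclidean diameter `d_{p,q}` of the circle circumscribing the regular hyperbolic `p`-gon of
interior angle `2π/q` with a vertex at the centre of the Poincaré disc, as a function of `α = π/q`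
(half the interior angle) and `β = π/p` (half the central angle). The polygon exists when
`0 < α`, `0 < β` and `α + β < π / 2`; the radicand is then positive. -/
noncomputable def circumcircleDiam (α β : ℝ) : ℝ :=
  2 * cos (α + β) * √(cos α ^ 2 - sin β ^ 2) / (cos (α + β) ^ 2 + (cos α ^ 2 - sin β ^ 2))

lemma one_sub_two_mul_mul_sqrt_div_sq {a b : ℝ} (hb : 0 ≤ b) (hab : a ^ 2 + b ≠ 0) :
    1 - (2 * a * √b / (a ^ 2 + b)) ^ 2 = ((b - a ^ 2) / (a ^ 2 + b)) ^ 2 := by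
  rw [div_pow, mul_pow, sq_sqrt hb]
  field_simp
  ring

lemma cos_sq_sub_sin_sq_eq_cos_add_mul_cos_sub (α β : ℝ) :
    cos α ^ 2 - sin β ^ 2 = cos (α + β) * cos (α - β) := by
  rw [cos_add, cos_sub]
  linear_combination sin β ^ 2 * sin_sq_add_cos_sq α - cos α ^ 2 * sin_sq_add_cos_sq β

lemma one_sub_circumcircleDiam_sq {α β : ℝ} (h : 0 < cos α ^ 2 - sin β ^ 2) :
    1 - circumcircleDiam α β ^ 2 = (tan α * tan β) ^ 2 := by
  have hb := cos_sq_sub_sin_sq_eq_cos_add_mul_cos_sub α β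
  have ha : cos (α + β) ≠ 0 := left_ne_zero_of_mul (hb ▸ h.ne')
  have hdiff : cos α ^ 2 - sin β ^ 2 - cos (α + β) ^ 2
      = 2 * cos (α + β) * (sin α * sin β) := by
    rw [hb, cos_sub, cos_add]; ring
  have hsum : cos (α + β) ^ 2 + (cos α ^ 2 - sin β ^ 2)
      = 2 * cos (α + β) * (cos α * cos β) := by
    rw [hb, cos_sub, cos_add]; ring
  calc 1 - circumcircleDiam α β ^ 2
      = ((cos α ^ 2 - sin β ^ 2 - cos (α + β) ^ 2) /
          (cos (α + β) ^ 2 + (cos α ^ 2 - sin β ^ 2))) ^ 2 :=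
        one_sub_two_mul_mul_sqrt_div_sq h.le (by positivity)
    _ = (sin α * sin β / (cos α * cos β)) ^ 2 := by
        rw [hdiff, hsum, mul_div_mul_left _ _ (mul_ne_zero two_ne_zero ha)]
    _ = (tan α * tan β) ^ 2 := by
        rw [tan_eq_sin_div_cos, tan_eq_sin_div_cos, div_mul_div_comm]

section Limits

variable {ι : Type*} {l : Filter ι}

lemma eventually_cos_sq_sub_sin_sq_pos {α β : ι → ℝ} (hα : Tendsto α l (nhds 0))
    (hβ : Tendsto β l (nhds 0)) : ∀ᶠ i in l, 0 < cos (α i) ^ 2 - sin (β i) ^ 2 :=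
  ((((continuous_cos.tendsto 0).comp hα).pow 2).sub
    (((continuous_sin.tendsto 0).comp hβ).pow 2)).eventually_const_lt (by simp)

lemma tendsto_mul_tan_div (x : ℝ) {u : ι → ℝ} (hu : Tendsto u l atTop) :
    Tendsto (fun i => u i * tan (x / u i)) l (nhds x) := by
  have htan : HasDerivAt tan 1 0 := by simpa using hasDerivAt_tan (x := 0) (by simp)
  simpa [div_eq_inv_mul] using
    htan.hasFDerivAt.lim x (tendsto_norm_atTop_atTop.comp hu)

theorem stmt_12_general {p q : ι → ℝ} (hp : Tendsto p l atTop) (hq : Tendsto q l atTop) :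
    Tendsto (fun i => p i ^ 2 * q i ^ 2 * (1 - circumcircleDiam (π / q i) (π / p i) ^ 2)) l
      (nhds (π ^ 4)) := by
  have hlim : Tendsto (fun i => (p i * tan (π / p i)) ^ 2 * (q i * tan (π / q i)) ^ 2) l
      (nhds (π ^ 4)) := by
    rw [show π ^ 4 = π ^ 2 * π ^ 2 by ring]
    exact ((tendsto_mul_tan_div π hp).pow 2).mul ((tendsto_mul_tan_div π hq).pow 2)
  refine hlim.congr' ?_
  filter_upwards [eventually_cos_sq_sub_sin_sq_pos (hq.const_div_atTop π) (hp.const_div_atTop π)]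
    with i hi
  rw [one_sub_circumcircleDiam_sq hi]
  ring

end Limits

theorem stmt_12 :
    Tendsto (fun pq : ℕ × ℕ =>
        (pq.1 : ℝ) ^ 2 * (pq.2 : ℝ) ^ 2 *
          (1 - (2 * cos (π / pq.2 + π / pq.1) *
              Real.sqrt (cos (π / pq.2) ^ 2 - sin (π / pq.1) ^ 2) /
              (cos (π / pq.2 + π / pq.1) ^ 2 +
                (cos (π / pq.2) ^ 2 - sin (π / pq.1) ^ 2))) ^ 2))
      (atTop ×ˢ atTop) (nhds (π ^ 4)) :=
  stmt_12_general (tendsto_natCast_atTop_atTop.comp tendsto_fst)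
    (tendsto_natCast_atTop_atTop.comp tendsto_snd)
end

section
/- For positive integers p and q, let a_{p,q} = cos(π/q + π/p), b_{p,q} = cos²(π/q) − sin²(π/p), d_{p,q} = 2·a_{p,q}·√(b_{p,q})/(a_{p,q}² + b_{p,q}), and δ_{p,q} = ln((1 + d_{p,q})/(1 − d_{p,q})). Then δ_{p,q} / (ln(p) + ln(q)) → 2 as p → ∞ and q → ∞ (jointly, along the product filter). -/
/-!
Put `x = π / q`, `y = π / p`, `a = cos (x + y)` and `s = √(cos² x - sin² y)`. Since
`d = 2as / (a² + s²)`, we have `(1 + d) / (1 - d) = ((s + a) / (s - a))²`, and the identity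
`s² - a² = 2 a sin x sin y` turns this into `δ = 2 log ((s + a)² / (2 a sin x sin y))`.
As `x, y → 0⁺` both `a` and `s` tend to `1`, so `δ + 2 (log x + log y) → 2 log 2`: the diameter
differs from `2 (log p + log q)` by a convergent quantity.
-/

open Real Filter
open scoped Topology

/-- The Euclidean diameter `d` of the circle circumscribing, in the Poincaré disc, the regular
`p`-gon with interior angle `2π / q` and one vertex at the centre, as a function of the angles
`x = π / q` and `y = π / p`. -/
noncomputable def euclideanDiameter (x y : ℝ) : ℝ :=
  2 * cos (x + y) * √(cos x ^ 2 - sin y ^ 2) / (cos (x + y) ^ 2 + (cos x ^ 2 - sin y ^ 2))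

/-- The hyperbolic diameter `δ` of that circle, obtained from the Euclidean one by Lobachevsky's
formula. -/
noncomputable def hyperbolicDiameter (x y : ℝ) : ℝ :=
  log ((1 + euclideanDiameter x y) / (1 - euclideanDiameter x y))

theorem one_add_div_one_sub_two_mul_div_sq_add_sq {K : Type*} [Field K] {a s : K}
    (h : a ^ 2 + s ^ 2 ≠ 0) :
    (1 + 2 * a * s / (a ^ 2 + s ^ 2)) / (1 - 2 * a * s / (a ^ 2 + s ^ 2)) =
      ((s + a) / (s - a)) ^ 2 := by
  rw [one_add_div h, one_sub_div h, div_div_div_cancel_right₀ h, div_pow]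
  congr 1 <;> ring

theorem cos_sq_sub_sin_sq_eq_cos_add_sq_add (x y : ℝ) :
    cos x ^ 2 - sin y ^ 2 = cos (x + y) ^ 2 + 2 * cos (x + y) * sin x * sin y := by
  rw [cos_add]
  linear_combination (-cos x ^ 2) * sin_sq_add_cos_sq y + sin y ^ 2 * sin_sq_add_cos_sq x

section Hyperbolic

variable {x y : ℝ}

theorem one_add_euclideanDiameter_div_one_sub_euclideanDiameter (hcos : 0 < cos (x + y))
    (hx : 0 < sin x) (hy : 0 < sin y) :
    (1 + euclideanDiameter x y) / (1 - euclideanDiameter x y) =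
      ((√(cos x ^ 2 - sin y ^ 2) + cos (x + y)) ^ 2 / (2 * cos (x + y)) / (sin x * sin y)) ^ 2 := by
  have hb := cos_sq_sub_sin_sq_eq_cos_add_sq_add x y
  have hs : √(cos x ^ 2 - sin y ^ 2) ^ 2 = cos x ^ 2 - sin y ^ 2 :=
    sq_sqrt (by rw [hb]; positivity)
  unfold euclideanDiameter
  set a := cos (x + y)
  set s := √(cos x ^ 2 - sin y ^ 2)
  have hsub : (s + a) * (s - a) = 2 * a * (sin x * sin y) := by linear_combination hs + hb
  have hsum : s + a ≠ 0 := by positivity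
  rw [← hs, one_add_div_one_sub_two_mul_div_sq_add_sq (by positivity), div_div, ← hsub, sq (s + a),
    mul_div_mul_left _ _ hsum]

/-- The assumption `x + y < π / 2`, that is `1 / p + 1 / q < 1 / 2`, is the condition for the
polygon to be hyperbolic. Dividing the sines by their arguments makes the right-hand side
continuous at the origin. -/
theorem hyperbolicDiameter_add_two_mul_log (hx : 0 < x) (hy : 0 < y) (hxy : x + y < π / 2) :
    hyperbolicDiameter x y + 2 * (log x + log y) =
      2 * (log ((√(cos x ^ 2 - sin y ^ 2) + cos (x + y)) ^ 2 / (2 * cos (x + y))) -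
        log (sinc x) - log (sinc y)) := by
  have hcos : 0 < cos (x + y) := cos_pos_of_mem_Ioo ⟨by linarith, hxy⟩
  have hsin_x : 0 < sin x := sin_pos_of_pos_of_lt_pi hx (by linarith)
  have hsin_y : 0 < sin y := sin_pos_of_pos_of_lt_pi hy (by linarith)
  rw [hyperbolicDiameter,
    one_add_euclideanDiameter_div_one_sub_euclideanDiameter hcos hsin_x hsin_y, log_pow,
    log_div (by positivity) (by positivity), log_mul hsin_x.ne' hsin_y.ne',
    sinc_of_ne_zero hx.ne', sinc_of_ne_zero hy.ne', log_div hsin_x.ne' hx.ne',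
    log_div hsin_y.ne' hy.ne']
  push_cast
  ring

end Hyperbolic

theorem tendsto_hyperbolicDiameter_add_two_mul_log :
    Tendsto (fun z : ℝ × ℝ => hyperbolicDiameter z.1 z.2 + 2 * (log z.1 + log z.2))
      (𝓝[>] 0 ×ˢ 𝓝[>] 0) (𝓝 (2 * log 2)) := by
  have hle : 𝓝[>] (0 : ℝ) ×ˢ 𝓝[>] (0 : ℝ) ≤ 𝓝 (0, 0) :=
    (prod_mono nhdsWithin_le_nhds nhdsWithin_le_nhds).trans_eq nhds_prod_eq.symm
  have hlim : Tendsto (fun z : ℝ × ℝ =>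
      2 * (log ((√(cos z.1 ^ 2 - sin z.2 ^ 2) + cos (z.1 + z.2)) ^ 2 / (2 * cos (z.1 + z.2))) -
        log (sinc z.1) - log (sinc z.2))) (𝓝 (0, 0)) (𝓝 (2 * log 2)) := by
    convert ContinuousAt.tendsto (x := ((0, 0) : ℝ × ℝ)) ?_ using 2
    · norm_num
    · fun_prop (disch := norm_num)
  have hsum : ∀ᶠ z : ℝ × ℝ in 𝓝 (0, 0), z.1 + z.2 < π / 2 :=
    (continuous_add.tendsto' _ _ (add_zero 0)).eventually_lt_const pi_div_two_pos
  refine (hlim.mono_left hle).congr' ?_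
  filter_upwards [tendsto_fst.eventually eventually_mem_nhdsWithin,
    tendsto_snd.eventually eventually_mem_nhdsWithin, hle hsum] with z hx hy hxy
  exact (hyperbolicDiameter_add_two_mul_log hx hy hxy).symm

theorem tendsto_div_of_tendsto_sub_mul {α 𝕜 : Type*} [Field 𝕜] [LinearOrder 𝕜]
    [IsStrictOrderedRing 𝕜] [TopologicalSpace 𝕜] [OrderTopology 𝕜] {l : Filter α} {f g : α → 𝕜}
    {b c : 𝕜} (hfg : Tendsto (fun t => f t - c * g t) l (𝓝 b)) (hg : Tendsto g l atTop) :
    Tendsto (fun t => f t / g t) l (𝓝 c) := by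
  have hlim := (hfg.div_atTop hg).add_const c
  rw [zero_add] at hlim
  refine hlim.congr' ?_
  filter_upwards [hg.eventually_ne_atTop 0] with t ht
  field_simp
  ring

theorem tendsto_const_div_atTop_nhdsGT_zero {𝕜 : Type*} [Field 𝕜] [LinearOrder 𝕜]
    [IsStrictOrderedRing 𝕜] [TopologicalSpace 𝕜] [OrderTopology 𝕜] {c : 𝕜} (hc : 0 < c) :
    Tendsto (fun t : 𝕜 => c / t) atTop (𝓝[>] 0) :=
  tendsto_nhdsWithin_iff.2 ⟨tendsto_const_nhds.div_atTop tendsto_id,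
    (eventually_gt_atTop 0).mono fun _ ht => div_pos hc ht⟩

theorem tendsto_hyperbolicDiameter_sub_two_mul_log :
    Tendsto (fun pq : ℝ × ℝ =>
        hyperbolicDiameter (π / pq.2) (π / pq.1) - 2 * (log pq.1 + log pq.2))
      (atTop ×ˢ atTop) (𝓝 (2 * log 2 - 4 * log π)) := by
  have hangle := tendsto_const_div_atTop_nhdsGT_zero pi_pos
  have hlim := (tendsto_hyperbolicDiameter_add_two_mul_log.comp
    ((hangle.comp tendsto_snd).prodMk (hangle.comp tendsto_fst))).sub_const (4 * log π)
  refine hlim.congr' ?_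
  filter_upwards [tendsto_fst.eventually (eventually_ne_atTop 0),
    tendsto_snd.eventually (eventually_ne_atTop 0)] with pq hp hq
  simp only [Function.comp_apply, log_div pi_ne_zero hp, log_div pi_ne_zero hq]
  ring

theorem stmt_13_general :
    Tendsto (fun pq : ℝ × ℝ =>
        hyperbolicDiameter (π / pq.2) (π / pq.1) / (log pq.1 + log pq.2))
      (atTop ×ˢ atTop) (𝓝 2) :=
  tendsto_div_of_tendsto_sub_mul tendsto_hyperbolicDiameter_sub_two_mul_log
    ((tendsto_log_atTop.comp tendsto_fst).atTop_add_atTop (tendsto_log_atTop.comp tendsto_snd))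

theorem stmt_13 :
    Tendsto (fun pq : ℕ × ℕ =>
        Real.log
            ((1 + 2 * cos (π / pq.2 + π / pq.1) *
                Real.sqrt (cos (π / pq.2) ^ 2 - sin (π / pq.1) ^ 2) /
                (cos (π / pq.2 + π / pq.1) ^ 2 +
                  (cos (π / pq.2) ^ 2 - sin (π / pq.1) ^ 2))) /
              (1 - 2 * cos (π / pq.2 + π / pq.1) *
                Real.sqrt (cos (π / pq.2) ^ 2 - sin (π / pq.1) ^ 2) /
                (cos (π / pq.2 + π / pq.1) ^ 2 +
                  (cos (π / pq.2) ^ 2 - sin (π / pq.1) ^ 2)))) /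
          (Real.log pq.1 + Real.log pq.2))
      (atTop ×ˢ atTop) (nhds 2) := by
  simpa only [hyperbolicDiameter, euclideanDiameter, Function.comp_def, Prod.map] using
    stmt_13_general.comp (tendsto_natCast_atTop_atTop.prodMap tendsto_natCast_atTop_atTop)
end
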